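/- Let m ∈ ℕ with m ≥ 1, let h : ℕ^m → ℕ be a polynomial in m variables with coefficients in ℕ and no constant term, and let A ⊆ ℕ. Then the following are equivalent: (1) there exist functions α : 𝒫_f(ℕ^ℕ) → ℕ and H : 𝒫_f(ℕ^ℕ) → 𝒫_f(ℕ) such that (a) whenever F ⊊ G in 𝒫_f(ℕ^ℕ), max H(F) < min H(G), and (b) whenever G₁ ⊊ G₂ ⊊ ⋯ ⊊ G_n ⊊ ⋯ is an infinite strictly increasing chain in 𝒫_f(ℕ^ℕ), f_i ∈ G_i for each i ∈ ℕ, and β₁ < ⋯ < β_m are in 𝒫_f(ℕ), then h(Σ_{i∈β₁}(α(G_i)+Σ_{t∈H(G_i)}f_i(t)), …, Σ_{i∈β_m}(α(G_i)+Σ_{t∈H(G_i)}f_i(t))) ∈ A; (2) there exists an idempotent ultrafilter p ∈ 𝒥 such that A belongs to the image of ⊗_{i=1}^m p under h (i.e., A ∈ h̃(⊗_{i=1}^m p), where h̃ denotes the pushforward of ultrafilters along h). -/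

import Mathlib

namespace MultiCST

/-- The sum `p + q` of ultrafilters on ℕ: `A ∈ p + q` iff `{x : {y : x+y ∈ A} ∈ q} ∈ p`. -/
def uAdd (p q : Ultrafilter ℕ) : Ultrafilter ℕ :=
  p.bind fun x => q.map fun y => x + y

/-- `A ⊆ ℕ` is a J-set. -/
def IsJSet (A : Set ℕ) : Prop :=
  ∀ F : Finset (ℕ → ℕ), F.Nonempty →
    ∃ (a : ℕ) (β : Finset ℕ), β.Nonempty ∧ ∀ f ∈ F, a + ∑ t ∈ β, f t ∈ A

/-- `p ∈ 𝒥`: every member of `p` is a J-set. -/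
def MemJ (p : Ultrafilter ℕ) : Prop := ∀ A : Set ℕ, A ∈ p → IsJSet A

/-- `p` is an idempotent ultrafilter. -/
def IdempotentUF (p : Ultrafilter ℕ) : Prop := uAdd p p = p

/-- `p` is a minimal idempotent ultrafilter. -/
def IsMinimalIdempotent (p : Ultrafilter ℕ) : Prop :=
  IdempotentUF p ∧
    ∀ q : Ultrafilter ℕ, IdempotentUF q → uAdd q p = q → uAdd p q = q → q = p

/-- Tensor product `⊗_{i=1}^m p_i` of ultrafilters on ℕ, as an ultrafilter on `Fin m → ℕ`. -/
def tensor : ∀ m : ℕ, (Fin m → Ultrafilter ℕ) → Ultrafilter (Fin m → ℕ)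
  | 0, _ => pure fun i => i.elim0
  | m + 1, p =>
      (p 0).bind fun x => (tensor m fun i => p i.succ).map fun v => Fin.cons x v

/-- `f : ℕ → ℕ` is (given by) a polynomial with coefficients in ℕ and zero constant term. -/
def IsPolyZeroConst (f : ℕ → ℕ) : Prop :=
  ∃ P : Polynomial ℕ, P.coeff 0 = 0 ∧ ∀ x, f x = P.eval x

/-- The linear combination `a₁·p₁ + a₂·p₂ + ⋯ + a_m·p_m` of ultrafilters on ℕ. -/
def linComb : ∀ m : ℕ, (Fin m → ℕ) → (Fin m → Ultrafilter ℕ) → Ultrafilter ℕ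
  | 0, _, _ => pure 0
  | m + 1, a, p =>
      uAdd ((p 0).map fun x => a 0 * x)
        (linComb m (fun i => a i.succ) fun i => p i.succ)

/-!
Two independent facts combine into one direction. If `p ∈ 𝒥` and every state of some process admits
`p`-many moves leading to an admissible state, then recursion along strict inclusion produces `α`
and `H` such that playing `α (G i) + ∑ t ∈ H (G i), f i t` along any chain keeps the process
admissible: only finitely many states are reachable below a given finite set, so one member of `p`
serves them all. If moreover `p` is idempotent and `B ∈ p ⊗ ⋯ ⊗ p`, then `p`-many one-step
extensions of an admissible finite sequence are admissible, where admissible means that all block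
sums met so far can still be completed to, and enlarged within, `B`.

For the converse, the sums along finite chains above `F` form a decreasing family of J-sets. By
partition regularity of J-sets (Hales–Jewett), the ultrafilters in `𝒥` containing the whole family
form a nonempty closed subsemigroup of `βM`. An idempotent in it works, because a chain above the
last set of another chain can be appended to it.
-/

open Filter Function

attribute [local instance] Ultrafilter.add Ultrafilter.addSemigroup

instance finset_noMaxOrder {X : Type*} [Infinite X] : NoMaxOrder (Finset X) where
  exists_gt F := by
    classical
    obtain ⟨g, hg⟩ := Infinite.exists_notMem_finset F
    exact ⟨insert g F, Finset.ssubset_insert hg⟩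

/-! ### J-sets in commutative monoids -/

/-- A J-set in an arbitrary commutative monoid; `IsJSet` is the case of `ℕ`. -/
def IsAddJSet {M : Type*} [AddCommMonoid M] (A : Set M) : Prop :=
  ∀ F : Finset (ℕ → M), F.Nonempty →
    ∃ (a : M) (β : Finset ℕ), β.Nonempty ∧ ∀ f ∈ F, a + ∑ t ∈ β, f t ∈ A

/-- Membership of an ultrafilter in `𝒥`, for an arbitrary commutative monoid; `MemJ` is the case
of `ℕ`. -/
def IsAddJUltrafilter {M : Type*} [AddCommMonoid M] (p : Ultrafilter M) : Prop :=
  ∀ A : Set M, A ∈ p → IsAddJSet A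

section JSet

variable {M : Type*} [AddCommMonoid M]

theorem not_isAddJSet_empty : ¬ IsAddJSet (∅ : Set M) := fun h => by
  obtain ⟨_, _, -, h0⟩ := h {0} (Finset.singleton_nonempty 0)
  exact h0 0 (Finset.mem_singleton_self 0)

theorem IsAddJSet.mono {A B : Set M} (hA : IsAddJSet A) (hAB : A ⊆ B) : IsAddJSet B := by
  intro F hF
  obtain ⟨a, β, hβ, hmem⟩ := hA F hF
  exact ⟨a, β, hβ, fun f hf => hAB (hmem f hf)⟩

theorem IsAddJSet.of_preimage_add_left {A : Set M} {x : M} (hA : IsAddJSet ((x + ·) ⁻¹' A)) :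
    IsAddJSet A := by
  intro F hF
  obtain ⟨a, β, hβ, hmem⟩ := hA F hF
  exact ⟨x + a, β, hβ, fun f hf => by
    simpa only [Set.mem_preimage, add_assoc] using hmem f hf⟩

theorem IsAddJSet.exists_sum_mem_gt {A : Set M} (hA : IsAddJSet A) (K : Finset ℕ)
    (F : Finset (ℕ → M)) :
    ∃ (a : M) (β : Finset ℕ), β.Nonempty ∧ (∀ s ∈ K, ∀ t ∈ β, s < t) ∧
      ∀ f ∈ F, a + ∑ t ∈ β, f t ∈ A := by
  classical
  let shift (n : ℕ) : ℕ ↪ ℕ := addRightEmbedding (n + 1)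
  obtain ⟨a, β, hβ, hmem⟩ := hA ((insert 0 F).image fun f => f ∘ shift (K.sup id))
    ((Finset.insert_nonempty 0 F).image _)
  refine ⟨a, β.map (shift (K.sup id)), hβ.map, fun s hs t ht => ?_, fun f hf => ?_⟩
  · obtain ⟨u, -, rfl⟩ := Finset.mem_map.1 ht
    have : s ≤ K.sup id := Finset.le_sup (f := id) hs
    simp only [shift, addRightEmbedding_apply]
    omega
  · rw [Finset.sum_map]
    exact hmem _ (Finset.mem_image_of_mem _ (Finset.mem_insert_of_mem hf))

theorem exists_add_sum_eq_sum_line {κ ι : Type*} [Fintype ι] (l : Combinatorics.Line κ ι)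
    (φ : κ → ℕ → M) (e : ℕ × ι ↪ ℕ) {β : Finset ℕ} (hβ : β.Nonempty) :
    ∃ (b : M) (γ : Finset ℕ), γ.Nonempty ∧
      ∀ x, b + ∑ t ∈ γ, φ x t = ∑ t ∈ β, ∑ i, φ (l x i) (e (t, i)) := by
  let active : Finset ι := {i | l.idxFun i = none}
  have hactive : active.Nonempty := l.proper.imp fun i hi => by simpa [active] using hi
  refine ⟨∑ t ∈ β, ∑ i, (l.idxFun i).elim 0 fun y => φ y (e (t, i)), (β ×ˢ active).map e,
    (hβ.product hactive).map, fun x => ?_⟩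
  rw [Finset.sum_map, Finset.sum_product, ← Finset.sum_add_distrib]
  refine Finset.sum_congr rfl fun t _ => ?_
  rw [Finset.sum_filter, ← Finset.sum_add_distrib]
  refine Finset.sum_congr rfl fun i _ => ?_
  cases hi : l.idxFun i <;> simp [hi]

theorem IsAddJSet.exists_forall_mem_or_forall_mem {A B : Set M} (h : IsAddJSet (A ∪ B))
    {F : Finset (ℕ → M)} (hF : F.Nonempty) :
    ∃ (a : M) (β : Finset ℕ), β.Nonempty ∧
      ((∀ f ∈ F, a + ∑ t ∈ β, f t ∈ A) ∨ ∀ f ∈ F, a + ∑ t ∈ β, f t ∈ B) := by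
  classical
  obtain ⟨ι, _, hmono⟩ := Combinatorics.Line.exists_mono_in_high_dimension F Prop
  obtain ⟨e, he⟩ := exists_injective_nat (ℕ × ι)
  have : Nonempty F := hF.to_subtype
  let spread (w : ι → F) (t : ℕ) : M := ∑ i, (w i : ℕ → M) (e (t, i))
  obtain ⟨a, β, hβ, hmem⟩ := h (Finset.univ.image spread) (Finset.univ_nonempty.image spread)
  have hspread (w : ι → F) : a + ∑ t ∈ β, spread w t ∈ A ∪ B :=
    hmem _ (Finset.mem_image_of_mem spread (Finset.mem_univ w))
  obtain ⟨l, c, hl⟩ := hmono fun w => a + ∑ t ∈ β, spread w t ∈ A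
  obtain ⟨b, γ, hγ, hsum⟩ := exists_add_sum_eq_sum_line l (fun f : F => f.1) ⟨e, he⟩ hβ
  have hline (f : F) : a + b + ∑ t ∈ γ, f.1 t = a + ∑ t ∈ β, spread (l f) t := by
    rw [add_assoc, hsum f]
    rfl
  refine ⟨a + b, γ, hγ, ?_⟩
  by_cases hc : c
  · exact .inl fun f hf => by
      rw [hline ⟨f, hf⟩]
      exact (hl ⟨f, hf⟩).mpr hc
  · exact .inr fun f hf => by
      rw [hline ⟨f, hf⟩]
      exact (hspread _).resolve_left fun hA => hc ((hl ⟨f, hf⟩).mp hA)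

theorem IsAddJSet.or_of_union {A B : Set M} (h : IsAddJSet (A ∪ B)) :
    IsAddJSet A ∨ IsAddJSet B := by
  classical
  by_contra! hnot
  simp only [IsAddJSet, not_forall] at hnot
  obtain ⟨⟨F₁, hF₁, hA⟩, F₂, -, hB⟩ := hnot
  obtain ⟨a, β, hβ, hmem | hmem⟩ := h.exists_forall_mem_or_forall_mem (hF₁.inl (t := F₂))
  · exact hA ⟨a, β, hβ, fun f hf => hmem f (Finset.mem_union_left _ hf)⟩
  · exact hB ⟨a, β, hβ, fun f hf => hmem f (Finset.mem_union_right _ hf)⟩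

end JSet

section PartitionRegular

variable {X : Type*}

theorem exists_ultrafilter_le_forall_mem {P : Set X → Prop} (hempty : ¬ P ∅)
    (hmono : ∀ A B, A ⊆ B → P A → P B) (hunion : ∀ A B, P (A ∪ B) → P A ∨ P B)
    {𝓕 : Filter X} (h𝓕 : ∀ A ∈ 𝓕, P A) :
    ∃ p : Ultrafilter X, ↑p ≤ 𝓕 ∧ ∀ A ∈ p, P A := by
  let small : Filter X := comk (fun A => ¬ P A) hempty (fun B hB A hAB hA => hB (hmono A B hAB hA))
    fun A hA B hB hAB => (hunion A B hAB).elim hA hB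
  have : NeBot (𝓕 ⊓ small) := by
    refine inf_neBot_iff.2 fun {A} hA {B} hB => ?_
    by_contra hAB
    have hsub : A ⊆ Bᶜ :=
      Set.disjoint_iff_inter_eq_empty.2 (Set.not_nonempty_iff_eq_empty.1 hAB) |>.subset_compl_right
    exact hB (hmono A Bᶜ hsub (h𝓕 A hA))
  refine ⟨.of (𝓕 ⊓ small), (Ultrafilter.of_le _).trans inf_le_left, fun A hA => ?_⟩
  by_contra hPA
  have hcompl : Aᶜ ∈ small := by simpa [small] using hPA
  exact Ultrafilter.compl_mem_iff_notMem.1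
    ((Ultrafilter.of_le (𝓕 ⊓ small)).trans inf_le_right hcompl) hA

theorem isClosed_setOf_forall_mem (P : Set X → Prop) :
    IsClosed {p : Ultrafilter X | ∀ A ∈ p, P A} := by
  rw [Set.ofPred_forall]
  exact isClosed_iInter fun A => isClosed_imp (ultrafilter_isOpen_basic A) isClosed_const

end PartitionRegular

section JUltrafilter

variable {M : Type*} [AddCommMonoid M]

theorem IsAddJUltrafilter.add {p q : Ultrafilter M} (hq : IsAddJUltrafilter q) :
    IsAddJUltrafilter (p + q) := by
  intro A hA
  obtain ⟨x, hx⟩ := ((Ultrafilter.eventually_add p q (· ∈ A)).1 hA).exists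
  exact (hq _ hx).of_preimage_add_left

theorem exists_isAddJUltrafilter_forall_mem {ι : Type*} [Nonempty ι] {T : ι → Set M}
    (hdir : Directed (· ⊇ ·) T) (hT : ∀ i, IsAddJSet (T i)) :
    ∃ p : Ultrafilter M, IsAddJUltrafilter p ∧ ∀ i, T i ∈ p := by
  have hdir' : Directed (· ≥ ·) fun i => 𝓟 (T i) := fun i j =>
    (hdir i j).imp fun _ h => ⟨principal_mono.2 h.1, principal_mono.2 h.2⟩
  have hJ (A : Set M) (hA : A ∈ ⨅ i, 𝓟 (T i)) : IsAddJSet A := by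
    obtain ⟨i, hi⟩ := (mem_iInf_of_directed hdir' A).1 hA
    exact (hT i).mono hi
  obtain ⟨p, hle, hp⟩ := exists_ultrafilter_le_forall_mem not_isAddJSet_empty
    (fun _ _ hAB hA => hA.mono hAB) (fun _ _ h => h.or_of_union) hJ
  exact ⟨p, hp, fun i => hle (mem_iInf_of_mem i (mem_principal_self _))⟩

end JUltrafilter

/-! ### Tensor powers -/

/-- The tensor power `⊗_{i=1}^m p` of an ultrafilter on an arbitrary type; `tensor` is the case
of `ℕ`, for possibly distinct factors. -/
def tensorPow {X : Type*} (p : Ultrafilter X) : ∀ m : ℕ, Ultrafilter (Fin m → X)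
  | 0 => pure fun i => i.elim0
  | m + 1 => p.bind fun x => (tensorPow p m).map fun v => Fin.cons x v

theorem tensor_const (p : Ultrafilter ℕ) (m : ℕ) : (tensor m fun _ => p) = tensorPow p m := by
  induction m with
  | zero => rfl
  | succ m ih => simp only [tensor, tensorPow, ih]

/-- The section of `B` over the first coordinate `x`. -/
def fiber {X : Type*} {m : ℕ} (B : Set (Fin (m + 1) → X)) (x : X) : Set (Fin m → X) :=
  {w | Fin.cons x w ∈ B}

theorem mem_tensorPow_succ {X : Type*} {p : Ultrafilter X} {m : ℕ} {B : Set (Fin (m + 1) → X)} :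
    B ∈ tensorPow p (m + 1) ↔ ∀ᶠ x in p, fiber B x ∈ tensorPow p m := Iff.rfl

theorem mem_tensorPow_zero {X : Type*} {p : Ultrafilter X} {B : Set (Fin 0 → X)}
    (w : Fin 0 → X) : B ∈ tensorPow p 0 ↔ w ∈ B := by
  rw [Subsingleton.elim w fun i => i.elim0]
  rfl

/-- The notion `β₁ < ⋯ < β_m` for nonempty finite sets of natural numbers. -/
def IsBlockSeq {m : ℕ} (β : Fin m → Finset ℕ) : Prop :=
  (∀ l, (β l).Nonempty) ∧ ∀ l l', l < l' → ∀ x ∈ β l, ∀ y ∈ β l', x < y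

theorem IsBlockSeq.tail {m : ℕ} {β : Fin (m + 1) → Finset ℕ} (hβ : IsBlockSeq β) :
    IsBlockSeq (Fin.tail β) :=
  ⟨fun l => hβ.1 l.succ, fun l l' hl => hβ.2 l.succ l'.succ (Fin.succ_lt_succ_iff.2 hl)⟩

theorem IsBlockSeq.cons {m : ℕ} {β₀ : Finset ℕ} {β : Fin m → Finset ℕ} (hβ₀ : β₀.Nonempty)
    (hβ : IsBlockSeq β) (hlt : ∀ l, ∀ x ∈ β₀, ∀ y ∈ β l, x < y) :
    IsBlockSeq (Fin.cons β₀ β : Fin (m + 1) → Finset ℕ) := by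
  simpa [IsBlockSeq, Fin.forall_fin_succ, hβ₀, hβ.1, Fin.succ_lt_succ_iff] using ⟨hlt, hβ.2⟩

theorem IsBlockSeq.map {m : ℕ} {β : Fin m → Finset ℕ} (hβ : IsBlockSeq β) {φ : ℕ ↪ ℕ}
    (hφ : StrictMono φ) : IsBlockSeq fun l => (β l).map φ := by
  refine ⟨fun l => (hβ.1 l).map, fun l l' hl => ?_⟩
  simpa [hφ.lt_iff_lt] using hβ.2 l l' hl

/-! ### Admissible sequences for an idempotent ultrafilter -/

section Idempotent

variable {M : Type*} [AddCommMonoid M] {p : Ultrafilter M}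

/-- The set `C⋆` of those elements of `C` that `p`-many elements translate into `C`. -/
def starSet (p : Ultrafilter M) (C : Set M) : Set M :=
  {s | s ∈ C ∧ ∀ᶠ y in p, s + y ∈ C}

theorem eventually_add_mem_starSet (hp : p + p = p) {C : Set M} {s : M}
    (hs : ∀ᶠ y in p, s + y ∈ C) : ∀ᶠ y in p, s + y ∈ starSet p C := by
  have hadd : ∀ᶠ y in p, ∀ᶠ z in p, s + (y + z) ∈ C := by
    rwa [← Ultrafilter.eventually_add p p (fun y => s + y ∈ C), hp]
  exact hs.and (by simpa only [add_assoc] using hadd)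

theorem eventually_forall_sum_update_mem_starSet (hp : p + p = p) {C : Set M} (hC : C ∈ p)
    {a n : ℕ} {x : ℕ → M}
    (hx : ∀ β ⊆ Finset.Ico a n, β.Nonempty → ∑ i ∈ β, x i ∈ starSet p C) :
    ∀ᶠ y in p, ∀ β ⊆ Finset.Ico a (n + 1), β.Nonempty →
      ∑ i ∈ β, update x n y i ∈ starSet p C := by
  have hadd : ∀ γ ∈ (Finset.Ico a n).powerset, ∀ᶠ y in p, ∑ i ∈ γ, x i + y ∈ starSet p C := by
    intro γ hγ
    refine eventually_add_mem_starSet hp ?_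
    rcases γ.eq_empty_or_nonempty with rfl | hne
    · simp only [Finset.sum_empty, zero_add]
      exact hC
    · exact (hx γ (Finset.mem_powerset.1 hγ) hne).2
  filter_upwards [(eventually_all_finset _).2 hadd] with y hy β hβ hne
  have hsub : β \ {n} ⊆ Finset.Ico a n := by
    intro i hi
    obtain ⟨hiβ, hin⟩ := Finset.mem_sdiff.1 hi
    have := Finset.mem_Ico.1 (hβ hiβ)
    rw [Finset.mem_singleton] at hin
    exact Finset.mem_Ico.2 (by omega)
  by_cases hn : n ∈ β
  · rw [Finset.sum_update_of_mem hn, add_comm]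
    exact hy _ (Finset.mem_powerset.2 hsub)
  · rw [Finset.sum_update_of_notMem hn]
    rw [Finset.sdiff_singleton_eq_erase, Finset.erase_eq_of_notMem hn] at hsub
    exact hx β hsub hne

/-- The terms of `x` with index in `[a, n)` are admissible for `B`: each sum over a first block
lies in `C⋆`, where `C` is the set of first coordinates over which `B` is still large, and the terms
after that block are admissible for the corresponding fiber of `B`. -/
def IsAdmissible (p : Ultrafilter M) :
    ∀ {m : ℕ}, Set (Fin m → M) → ℕ → ℕ → (ℕ → M) → Prop
  | 0, _, _, _, _ => True
  | m + 1, B, a, n, x =>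
      (∀ β ⊆ Finset.Ico a n, β.Nonempty →
        ∑ i ∈ β, x i ∈ starSet p {s | fiber B s ∈ tensorPow p m}) ∧
      ∀ k ≤ n, ∀ β ⊆ Finset.Ico a k, β.Nonempty →
        IsAdmissible p (fiber B (∑ i ∈ β, x i)) k n x

theorem isAdmissible_self {m : ℕ} (B : Set (Fin m → M)) (a : ℕ) (x : ℕ → M) :
    IsAdmissible p B a a x := by
  cases m with
  | zero => trivial
  | succ m =>
    refine ⟨fun β hβ hne => ?_, fun k hk β hβ hne => ?_⟩
    · simp_all [Finset.subset_empty]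
    · simp_all [Finset.subset_empty]

theorem IsAdmissible.eventually_update (hp : p + p = p) {m : ℕ} {B : Set (Fin m → M)}
    (hB : B ∈ tensorPow p m) {a n : ℕ} {x : ℕ → M} (hx : IsAdmissible p B a n x) :
    ∀ᶠ y in p, IsAdmissible p B a (n + 1) (update x n y) := by
  induction m generalizing a with
  | zero => exact .of_forall fun _ => trivial
  | succ m ih =>
    have htail : ∀ k ∈ Finset.range (n + 1), ∀ β ∈ (Finset.Ico a k).powerset, ∀ᶠ y in p,
        β.Nonempty → IsAdmissible p (fiber B (∑ i ∈ β, x i)) k (n + 1) (update x n y) := by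
      intro k hk β hβ
      rw [eventually_imp_distrib_left]
      intro hne
      have hkn : k ≤ n := Nat.lt_succ_iff.1 (Finset.mem_range.1 hk)
      rw [Finset.mem_powerset] at hβ
      exact ih (hx.1 β (hβ.trans (Finset.Ico_subset_Ico_right hkn)) hne).1 (hx.2 k hkn β hβ hne)
    simp only [← eventually_all_finset] at htail
    filter_upwards [htail, eventually_forall_sum_update_mem_starSet hp
      (mem_tensorPow_succ.1 hB) hx.1] with y hy hstar
    refine ⟨hstar, fun k hk β hβ hne => ?_⟩
    rcases hk.eq_or_lt with rfl | hk
    · exact isAdmissible_self _ _ _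
    · have hn : n ∉ β := fun hn => by
        have := Finset.mem_Ico.1 (hβ hn)
        omega
      rw [Finset.sum_update_of_notMem hn]
      exact hy k (Finset.mem_range.2 hk) β (Finset.mem_powerset.2 hβ) hne

theorem IsAdmissible.sum_mem {m : ℕ} {B : Set (Fin m → M)} (hB : B ∈ tensorPow p m)
    {a n : ℕ} {x : ℕ → M} (hx : IsAdmissible p B a n x) {β : Fin m → Finset ℕ}
    (hβ : IsBlockSeq β) (hsub : ∀ l, β l ⊆ Finset.Ico a n) :
    (fun l => ∑ i ∈ β l, x i) ∈ B := by
  induction m generalizing a with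
  | zero => exact (mem_tensorPow_zero _).1 hB
  | succ m ih =>
    let k := (β 0).max' (hβ.1 0) + 1
    have hkn : k ≤ n := (Finset.mem_Ico.1 (hsub 0 ((β 0).max'_mem (hβ.1 0)))).2
    have hhead : β 0 ⊆ Finset.Ico a k := fun i hi =>
      Finset.mem_Ico.2 ⟨(Finset.mem_Ico.1 (hsub 0 hi)).1, Nat.lt_succ_of_le ((β 0).le_max' i hi)⟩
    have htail (l : Fin m) : Fin.tail β l ⊆ Finset.Ico k n := fun i hi =>
      Finset.mem_Ico.2 ⟨hβ.2 0 l.succ l.succ_pos _ ((β 0).max'_mem (hβ.1 0)) i hi,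
        (Finset.mem_Ico.1 (hsub l.succ hi)).2⟩
    have hfiber := ih (hx.1 (β 0) (hsub 0) (hβ.1 0)).1 (hx.2 k hkn (β 0) hhead (hβ.1 0))
      hβ.tail htail
    have hcons : (Fin.cons (∑ i ∈ β 0, x i) fun l => ∑ i ∈ Fin.tail β l, x i) =
        fun l => ∑ i ∈ β l, x i := Fin.cons_self_tail fun l => ∑ i ∈ β l, x i
    exact hcons ▸ hfiber

end Idempotent

/-! ### Recursion along strict inclusion -/

theorem exists_fun_of_forall_finset_exists {ι α : Type*} [Preorder ι] [LocallyFiniteOrderBot ι]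
    [WellFoundedLT ι] (P : α → Prop) (r : ι → α → α → Prop)
    (h : ∀ (i : ι) (s : Finset α), (∀ x ∈ s, P x) → ∃ y, P y ∧ ∀ x ∈ s, r i x y) :
    ∃ f : ι → α, (∀ i, P (f i)) ∧ ∀ i j, i < j → r j (f i) (f j) := by
  classical
  have hsub (i : ι) (s : Finset {x // P x}) : ∃ y : {x // P x}, ∀ x ∈ s, r i x y := by
    obtain ⟨y, hy, hr⟩ := h i (s.map (.subtype P)) (by simp +contextual)
    exact ⟨⟨y, hy⟩, fun x hx => hr x (Finset.mem_map_of_mem _ hx)⟩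
  choose next hnext using hsub
  let f : ι → {x // P x} := wellFounded_lt.fix fun i prev =>
    next i ((Finset.Iio i).attach.image fun j : {j // j ∈ Finset.Iio i} =>
      prev j.1 (Finset.mem_Iio.1 j.2))
  have hf (i : ι) : f i =
      next i ((Finset.Iio i).attach.image fun j : {j // j ∈ Finset.Iio i} => f j.1) :=
    wellFounded_lt.fix_eq _ i
  refine ⟨fun i => f i, fun i => (f i).2, fun i j hij => ?_⟩
  change r j (f i) (f j)
  rw [hf j]
  exact hnext j _ _ (Finset.mem_image.2 ⟨⟨i, Finset.mem_Iio.2 hij⟩, Finset.mem_attach _ _, rfl⟩)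

section Strategy

variable {M σ : Type*} [AddCommMonoid M] {p : Ultrafilter M} {Good : σ → Prop}
  {move : σ → M → σ} {s₀ : σ}

theorem IsAddJUltrafilter.exists_forall_move_good (hp : IsAddJUltrafilter p)
    (hmove : ∀ s, Good s → ∀ᶠ y in p, Good (move s y)) {S : Finset σ} (hS : ∀ s ∈ S, Good s)
    (K : Finset ℕ) (F : Finset (ℕ → M)) :
    ∃ (a : M) (β : Finset ℕ), β.Nonempty ∧ (∀ x ∈ K, ∀ y ∈ β, x < y) ∧
      ∀ f ∈ F, ∀ s ∈ S, Good (move s (a + ∑ t ∈ β, f t)) :=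
  (hp _ ((eventually_all_finset S).2 fun s hs => hmove s (hS s hs))).exists_sum_mem_gt K F

/-- The recursion also returns `R F`, a finite set of good states containing all states reachable
along chains that end at `F`. -/
theorem IsAddJUltrafilter.exists_reachable (hp : IsAddJUltrafilter p) (h₀ : Good s₀)
    (hmove : ∀ s, Good s → ∀ᶠ y in p, Good (move s y)) :
    ∃ (α : Finset (ℕ → M) → M) (H : Finset (ℕ → M) → Finset ℕ) (R : Finset (ℕ → M) → Finset σ),
      (∀ F, (H F).Nonempty) ∧ (∀ F, s₀ ∈ R F) ∧ (∀ F, ∀ s ∈ R F, Good s) ∧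
      ∀ F G, F ⊂ G → (∀ x ∈ H F, ∀ y ∈ H G, x < y) ∧
        ∀ f ∈ G, ∀ s ∈ R F, move s (α G + ∑ t ∈ H G, f t) ∈ R G := by
  classical
  let Valid (c : M × Finset ℕ × Finset σ) : Prop :=
    c.2.1.Nonempty ∧ s₀ ∈ c.2.2 ∧ ∀ s ∈ c.2.2, Good s
  let Extends (G : Finset (ℕ → M)) (c' c : M × Finset ℕ × Finset σ) : Prop :=
    (∀ x ∈ c'.2.1, ∀ y ∈ c.2.1, x < y) ∧
      ∀ f ∈ G, ∀ s ∈ c'.2.2, move s (c.1 + ∑ t ∈ c.2.1, f t) ∈ c.2.2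
  have hnext : ∀ (G : Finset (ℕ → M)) (prev : Finset (M × Finset ℕ × Finset σ)),
      (∀ c ∈ prev, Valid c) → ∃ c, Valid c ∧ ∀ c' ∈ prev, Extends G c' c := by
    intro G prev hprev
    have hgood : ∀ s ∈ prev.biUnion (·.2.2), Good s := by
      intro s hs
      obtain ⟨c, hc, hsc⟩ := Finset.mem_biUnion.1 hs
      exact (hprev c hc).2.2 s hsc
    obtain ⟨a, β, hβ, hβlt, hmoved⟩ :=
      hp.exists_forall_move_good hmove hgood (prev.biUnion (·.2.1)) G
    refine ⟨(a, β, insert s₀ (Finset.image₂ (fun f s => move s (a + ∑ t ∈ β, f t)) G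
      (prev.biUnion (·.2.2)))), ⟨hβ, Finset.mem_insert_self _ _, ?_⟩, fun c hc => ⟨?_, ?_⟩⟩
    · simp only [Finset.mem_insert, Finset.mem_image₂]
      rintro s (rfl | ⟨f, hf, s, hs, rfl⟩)
      exacts [h₀, hmoved f hf s hs]
    · exact fun x hx => hβlt x (Finset.mem_biUnion.2 ⟨c, hc, hx⟩)
    · exact fun f hf s hs => Finset.mem_insert_of_mem
        (Finset.mem_image₂_of_mem hf (Finset.mem_biUnion.2 ⟨c, hc, hs⟩))
  obtain ⟨c, hc, hlt⟩ := exists_fun_of_forall_finset_exists Valid Extends hnext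
  exact ⟨fun F => (c F).1, fun F => (c F).2.1, fun F => (c F).2.2, fun F => (hc F).1,
    fun F => (hc F).2.1, fun F => (hc F).2.2, hlt⟩

theorem IsAddJUltrafilter.exists_strategy (hp : IsAddJUltrafilter p) (h₀ : Good s₀)
    (hmove : ∀ s, Good s → ∀ᶠ y in p, Good (move s y)) :
    ∃ (α : Finset (ℕ → M) → M) (H : Finset (ℕ → M) → Finset ℕ),
      (∀ F, (H F).Nonempty) ∧ (∀ F G, F ⊂ G → ∀ x ∈ H F, ∀ y ∈ H G, x < y) ∧
      ∀ (G : ℕ → Finset (ℕ → M)) (f : ℕ → ℕ → M), StrictMono G → (∀ i, f i ∈ G i) →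
        ∀ s : ℕ → σ, s 0 = s₀ →
          (∀ n, s (n + 1) = move (s n) (α (G n) + ∑ t ∈ H (G n), f n t)) → ∀ n, Good (s n) := by
  obtain ⟨α, H, R, hH, hR₀, hgood, hlt⟩ := hp.exists_reachable h₀ hmove
  refine ⟨α, H, hH, fun F G hFG => (hlt F G hFG).1, fun G f hG hf s hs₀ hs n => ?_⟩
  have hreach (n : ℕ) : ∃ F ⊂ G n, s n ∈ R F := by
    induction n with
    | zero => exact ⟨∅, Finset.empty_ssubset.2 ⟨f 0, hf 0⟩, hs₀ ▸ hR₀ ∅⟩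
    | succ n ih =>
      obtain ⟨F, hF, hsF⟩ := ih
      exact ⟨G n, hG n.lt_succ_self, hs n ▸ (hlt F (G n) hF).2 (f n) (hf n) (s n) hsF⟩
  obtain ⟨F, -, hsF⟩ := hreach n
  exact hgood F _ hsF

end Strategy

theorem indicator_Iio_add_one {M : Type*} [Zero M] (x : ℕ → M) (n : ℕ) :
    (Set.Iio (n + 1)).indicator x = update ((Set.Iio n).indicator x) n (x n) := by
  ext i
  simp only [Set.indicator_apply, Set.mem_Iio, update_apply]
  grind

theorem IsAddJUltrafilter.exists_forall_sum_mem {M : Type*} [AddCommMonoid M] {p : Ultrafilter M}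
    (hp : IsAddJUltrafilter p) (hidem : p + p = p) {m : ℕ} {B : Set (Fin m → M)}
    (hB : B ∈ tensorPow p m) :
    ∃ (α : Finset (ℕ → M) → M) (H : Finset (ℕ → M) → Finset ℕ),
      (∀ F, (H F).Nonempty) ∧ (∀ F G, F ⊂ G → ∀ x ∈ H F, ∀ y ∈ H G, x < y) ∧
      ∀ (G : ℕ → Finset (ℕ → M)) (f : ℕ → ℕ → M), StrictMono G → (∀ i, f i ∈ G i) →
        ∀ β : Fin m → Finset ℕ, IsBlockSeq β →
          (fun l => ∑ i ∈ β l, (α (G i) + ∑ t ∈ H (G i), f i t)) ∈ B := by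
  obtain ⟨α, H, hH, hlt, hgood⟩ := hp.exists_strategy
    (Good := fun s : ℕ × (ℕ → M) => IsAdmissible p B 0 s.1 s.2)
    (move := fun s y => (s.1 + 1, update s.2 s.1 y)) (s₀ := (0, 0)) (isAdmissible_self (a := 0) B 0)
    fun s hs => hs.eventually_update hidem hB
  refine ⟨α, H, hH, hlt, fun G f hG hf β hβ => ?_⟩
  let x (i : ℕ) : M := α (G i) + ∑ t ∈ H (G i), f i t
  let N := (Finset.univ.biUnion β).sup id + 1
  have hN (l : Fin m) : β l ⊆ Finset.Ico 0 N := fun i hi => by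
    have : i ≤ (Finset.univ.biUnion β).sup id :=
      Finset.le_sup (f := id) (Finset.mem_biUnion.2 ⟨l, Finset.mem_univ l, hi⟩)
    exact Finset.mem_Ico.2 ⟨i.zero_le, Nat.lt_succ_of_le this⟩
  have hadm : IsAdmissible p B 0 N ((Set.Iio N).indicator x) :=
    hgood G f hG hf (fun n => (n, (Set.Iio n).indicator x))
      (congrArg (0, ·) (funext fun i => by simp))
      (fun n => congrArg (n + 1, ·) (indicator_Iio_add_one x n)) N
  convert hadm.sum_mem hB hβ hN using 2 with l
  refine Finset.sum_congr rfl fun i hi => ?_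
  rw [Set.indicator_of_mem (Set.mem_Iio.2 (Finset.mem_Ico.1 (hN l hi)).2)]

/-! ### Sums along chains -/

/-- `G` is an infinite strictly increasing chain of finite sets above `F`, and `f` selects an
element from each of its members. -/
structure IsSelectedChain {X : Type*} (F : Finset X) (G : ℕ → Finset X) (f : ℕ → X) : Prop where
  ssubset_zero : F ⊂ G 0
  strictMono : StrictMono G
  mem : ∀ i, f i ∈ G i

/-- The sequence `a, s 0, s 1, …`. -/
def consSeq {X : Type*} (a : X) (s : ℕ → X) : ℕ → X
  | 0 => a
  | n + 1 => s n

theorem exists_isSelectedChain {X : Type*} [Infinite X] (F : Finset X) :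
    ∃ G f, IsSelectedChain F G f := by
  obtain ⟨K, hFK⟩ := exists_gt F
  obtain ⟨G, hG, rfl⟩ := Nat.exists_strictMono' K
  have hne (i : ℕ) : (G i).Nonempty :=
    Finset.empty_ssubset.1 ((Finset.empty_subset F).trans_ssubset
      (hFK.trans_le (hG.monotone i.zero_le)))
  choose f hf using hne
  exact ⟨G, f, hFK, hG, hf⟩

theorem IsSelectedChain.cons {X : Type*} {F K : Finset X} {g : X} {G : ℕ → Finset X} {f : ℕ → X}
    (hFK : F ⊂ K) (hg : g ∈ K) (h : IsSelectedChain K G f) :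
    IsSelectedChain F (consSeq K G) (consSeq g f) where
  ssubset_zero := hFK
  strictMono := strictMono_nat_of_lt_succ fun
    | 0 => h.ssubset_zero
    | n + 1 => h.strictMono n.lt_succ_self
  mem
    | 0 => hg
    | n + 1 => h.mem n

section ChainSum

variable {X M : Type*} [AddCommMonoid M]

/-- `IsChainSum v F L x` means that `x = v K₁ f₁ + ⋯ + v Kₙ fₙ` for some finite chain
`F ⊂ K₁ ⊂ ⋯ ⊂ Kₙ = L` with `n ≥ 1` and some `fᵢ ∈ Kᵢ`. -/
inductive IsChainSum (v : Finset X → X → M) : Finset X → Finset X → M → Prop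
  | single {F K : Finset X} {f : X} (hFK : F ⊂ K) (hf : f ∈ K) : IsChainSum v F K (v K f)
  | cons {F K L : Finset X} {f : X} {x : M} (hFK : F ⊂ K) (hf : f ∈ K)
      (hx : IsChainSum v K L x) : IsChainSum v F L (v K f + x)

variable {v : Finset X → X → M}

theorem IsChainSum.mono {F F' L : Finset X} {x : M} (hF : F ⊆ F') (hx : IsChainSum v F' L x) :
    IsChainSum v F L x := by
  cases hx with
  | single hFK hf => exact .single (hF.trans_ssubset hFK) hf
  | cons hFK hf hx => exact .cons (hF.trans_ssubset hFK) hf hx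

theorem IsChainSum.add {F K L : Finset X} {x y : M} (hx : IsChainSum v F K x)
    (hy : IsChainSum v K L y) : IsChainSum v F L (x + y) := by
  induction hx with
  | single hFK hf => exact .cons hFK hf hy
  | cons hFK hf _ ih => exact add_assoc (v _ _) _ y ▸ .cons hFK hf (ih hy)

variable (v)

/-- The set of all sums along finite chains above `F`. -/
def chainSums (F : Finset X) : Set M := {x | ∃ L, IsChainSum v F L x}

/-- The tuples of sums over `m` successive blocks of an infinite chain above `F`. -/
def chainBlockSums (F : Finset X) (m : ℕ) : Set (Fin m → M) :=
  {w | ∃ G f β, IsSelectedChain F G f ∧ IsBlockSeq β ∧ w = fun l => ∑ i ∈ β l, v (G i) (f i)}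

theorem antitone_chainSums : Antitone (chainSums v) :=
  fun _ _ hF _ ⟨L, hx⟩ => ⟨L, hx.mono hF⟩

theorem isAddJSet_chainSums [Nontrivial M] (α : Finset (ℕ → M) → M)
    {H : Finset (ℕ → M) → Finset ℕ} (hH : ∀ F, F.Nonempty → (H F).Nonempty)
    (F : Finset (ℕ → M)) : IsAddJSet (chainSums (fun K f => α K + ∑ t ∈ H K, f t) F) := by
  classical
  intro F' hF'
  obtain ⟨K, hK⟩ := exists_gt (F ∪ F')
  have hF'K : F' ⊆ K := Finset.subset_union_right.trans hK.subset
  exact ⟨α K, H K, hH K (hF'.mono hF'K), fun f hf =>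
    ⟨K, .single (Finset.subset_union_left.trans_ssubset hK) (hF'K hf)⟩⟩

theorem chainSums_mem_add {p q : Ultrafilter M} (hp : ∀ F, chainSums v F ∈ p)
    (hq : ∀ F, chainSums v F ∈ q) (F : Finset X) : chainSums v F ∈ p + q := by
  refine (Ultrafilter.eventually_add p q (· ∈ chainSums v F)).2 ?_
  filter_upwards [hp F] with x ⟨K, hx⟩
  filter_upwards [hq K] with y ⟨L, hy⟩
  exact ⟨L, hx.add hy⟩

variable {v}

theorem cons_mem_chainBlockSums {F K : Finset X} {f : X} (hFK : F ⊂ K) (hf : f ∈ K) {m : ℕ}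
    {w : Fin m → M} (hw : w ∈ chainBlockSums v K m) :
    Fin.cons (v K f) w ∈ chainBlockSums v F (m + 1) := by
  obtain ⟨G, g, β, hG, hβ, rfl⟩ := hw
  refine ⟨consSeq K G, consSeq f g, Fin.cons {0} fun l => (β l).map (addRightEmbedding 1),
    hG.cons hFK hf, .cons (Finset.singleton_nonempty 0) (hβ.map add_left_strictMono) ?_, ?_⟩
  · simp
  · funext l
    cases l using Fin.cases <;> simp [consSeq]

theorem cons_add_mem_chainBlockSums {F K : Finset X} {f : X} (hFK : F ⊂ K) (hf : f ∈ K) {m : ℕ}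
    {x : M} {w : Fin m → M} (hw : Fin.cons x w ∈ chainBlockSums v K (m + 1)) :
    Fin.cons (v K f + x) w ∈ chainBlockSums v F (m + 1) := by
  obtain ⟨G, g, β, hG, hβ, hxw⟩ := hw
  obtain ⟨rfl, rfl⟩ : x = _ ∧ w = _ := Fin.cons_injective2 (hxw.trans (Fin.cons_self_tail _).symm)
  have hβ' := hβ.map (φ := addRightEmbedding 1) add_left_strictMono
  refine ⟨consSeq K G, consSeq f g,
    Fin.cons (insert 0 ((β 0).map (addRightEmbedding 1)))
      fun l => (β l.succ).map (addRightEmbedding 1),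
    hG.cons hFK hf, .cons (Finset.insert_nonempty _ _) hβ'.tail ?_, ?_⟩
  · intro l
    simpa using hβ.2 0 l.succ l.succ_pos
  · funext l
    cases l using Fin.cases <;> simp [consSeq, Fin.tail]

theorem IsChainSum.cons_mem_chainBlockSums {F L : Finset X} {x : M} (hx : IsChainSum v F L x)
    {m : ℕ} {w : Fin m → M} (hw : w ∈ chainBlockSums v L m) :
    Fin.cons x w ∈ chainBlockSums v F (m + 1) := by
  induction hx with
  | single hFK hf => exact MultiCST.cons_mem_chainBlockSums hFK hf hw
  | cons hFK hf _ ih => exact cons_add_mem_chainBlockSums hFK hf (ih hw)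

theorem chainBlockSums_mem_tensorPow [Infinite X] {p : Ultrafilter M}
    (hp : ∀ F, chainSums v F ∈ p) (F : Finset X) (m : ℕ) :
    chainBlockSums v F m ∈ tensorPow p m := by
  induction m generalizing F with
  | zero =>
    obtain ⟨G, f, hG⟩ := exists_isSelectedChain F
    exact (mem_tensorPow_zero _).2
      ⟨G, f, fun l => l.elim0, hG, ⟨fun l => l.elim0, fun l => l.elim0⟩, rfl⟩
  | succ m ih =>
    refine mem_tensorPow_succ.2 ?_
    filter_upwards [hp F] with x ⟨L, hx⟩
    exact mem_of_superset (ih L) fun w hw => hx.cons_mem_chainBlockSums hw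

end ChainSum

theorem exists_idempotent_isAddJUltrafilter {M : Type*} [AddCommMonoid M] [Nontrivial M]
    (α : Finset (ℕ → M) → M) {H : Finset (ℕ → M) → Finset ℕ}
    (hH : ∀ F, F.Nonempty → (H F).Nonempty) :
    ∃ p : Ultrafilter M, p + p = p ∧ IsAddJUltrafilter p ∧
      ∀ F, chainSums (fun K f => α K + ∑ t ∈ H K, f t) F ∈ p := by
  let T := chainSums fun K f => α K + ∑ t ∈ H K, f t
  let Q : Set (Ultrafilter M) := {p | IsAddJUltrafilter p} ∩ {p | ∀ F, T F ∈ p}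
  have hne : Q.Nonempty := exists_isAddJUltrafilter_forall_mem
    (antitone_chainSums _).directed_ge (isAddJSet_chainSums α hH)
  have hclosed : IsClosed Q := by
    refine (isClosed_setOf_forall_mem IsAddJSet).inter ?_
    rw [Set.ofPred_forall]
    exact isClosed_iInter fun F => ultrafilter_isClosed_basic (T F)
  have hadd : ∀ p ∈ Q, ∀ q ∈ Q, p + q ∈ Q := fun p hp q hq =>
    ⟨hq.1.add, chainSums_mem_add _ hp.2 hq.2⟩
  obtain ⟨p, hpQ, hidem⟩ := exists_idempotent_in_compact_add_subsemigroup
    Ultrafilter.continuous_add_left Q hne hclosed.isCompact hadd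
  exact ⟨p, hidem, hpQ.1, hpQ.2⟩

theorem polynomial_image_stronger_CST_I_general {M : Type*} [AddCommMonoid M] [Nontrivial M]
    {m : ℕ} (B : Set (Fin m → M)) :
    (∃ (α : Finset (ℕ → M) → M) (H : Finset (ℕ → M) → Finset ℕ),
      (∀ F : Finset (ℕ → M), F.Nonempty → (H F).Nonempty) ∧
      (∀ F G : Finset (ℕ → M), F.Nonempty → F ⊂ G →
        ∀ x ∈ H F, ∀ y ∈ H G, x < y) ∧
      (∀ G : ℕ → Finset (ℕ → M),
        (∀ i, (G i).Nonempty) → (∀ i j, i < j → G i ⊂ G j) →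
        ∀ f : ℕ → ℕ → M, (∀ i, f i ∈ G i) →
        ∀ β : Fin m → Finset ℕ,
          (∀ l, (β l).Nonempty) →
          (∀ l l' : Fin m, l < l' → ∀ x ∈ β l, ∀ y ∈ β l', x < y) →
          (fun l => ∑ i ∈ β l, (α (G i) + ∑ t ∈ H (G i), f i t)) ∈ B))
    ↔
    (∃ p : Ultrafilter M, p + p = p ∧ IsAddJUltrafilter p ∧ B ∈ tensorPow p m) := by
  constructor
  · rintro ⟨α, H, hH, -, hB⟩
    obtain ⟨p, hidem, hJ, hp⟩ := exists_idempotent_isAddJUltrafilter α hH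
    refine ⟨p, hidem, hJ, mem_of_superset (chainBlockSums_mem_tensorPow hp ∅ m) ?_⟩
    rintro _ ⟨G, f, β, hG, hβ, rfl⟩
    exact hB G (fun i => ⟨f i, hG.mem i⟩) (fun _ _ hij => hG.strictMono hij) f hG.mem β hβ.1 hβ.2
  · rintro ⟨p, hidem, hJ, hB⟩
    obtain ⟨α, H, hH, hlt, hmem⟩ := hJ.exists_forall_sum_mem hidem hB
    exact ⟨α, H, fun F _ => hH F, fun F G _ => hlt F G, fun G _ hG f hf β hne hβ =>
      hmem G f (fun i j hij => hG i j hij) hf β ⟨hne, hβ⟩⟩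

/-- Polynomial Milliken–Taylor / stronger central sets theorem, single idempotent,
composed with a polynomial `h : ℕ^m → ℕ` with no constant term. -/
theorem polynomial_image_stronger_CST_I (m : ℕ) (hm : 1 ≤ m)
    (h : (Fin m → ℕ) → ℕ)
    (hh : ∃ Q : MvPolynomial (Fin m) ℕ,
      MvPolynomial.coeff 0 Q = 0 ∧ ∀ v, h v = MvPolynomial.eval v Q)
    (A : Set ℕ) :
    (∃ (α : Finset (ℕ → ℕ) → ℕ) (H : Finset (ℕ → ℕ) → Finset ℕ),
      (∀ F : Finset (ℕ → ℕ), F.Nonempty → (H F).Nonempty) ∧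
      (∀ F G : Finset (ℕ → ℕ), F.Nonempty → F ⊂ G →
        ∀ x ∈ H F, ∀ y ∈ H G, x < y) ∧
      (∀ G : ℕ → Finset (ℕ → ℕ),
        (∀ i, (G i).Nonempty) → (∀ i j, i < j → G i ⊂ G j) →
        ∀ f : ℕ → ℕ → ℕ, (∀ i, f i ∈ G i) →
        ∀ β : Fin m → Finset ℕ,
          (∀ l, (β l).Nonempty) →
          (∀ l l' : Fin m, l < l' → ∀ x ∈ β l, ∀ y ∈ β l', x < y) →
          h (fun l => ∑ i ∈ β l, (α (G i) + ∑ t ∈ H (G i), f i t)) ∈ A))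
    ↔
    (∃ p : Ultrafilter ℕ, IdempotentUF p ∧ MemJ p ∧
      A ∈ (tensor m fun _ => p).map h) := by
  simp only [tensor_const]
  exact polynomial_image_stronger_CST_I_general (h ⁻¹' A)

end MultiCST
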